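/- Fix k > 0 and suppose n > max(2k, 4096). Let (Y_t) be the Gibbs sampler on M_n with Y_0 distributed according to U_n. Then P[min_{1≤i≤n, j∈{1,2}} min_{0≤t≤n²−1} Y_t[i,j] ≤ n^{−5.5−k}] ≤ 2·n^{−k}, and likewise P[max_{1≤i≤n, j∈{1,2}} max_{0≤t≤n²−1} Y_t[i,j] ≥ 2 − n^{−5.5−k}] ≤ 2·n^{−k}. -/

import Mathlib

open MeasureTheory

noncomputable section

/-- Uniform probability measure on a finset. -/
def unifOn {α : Type*} [MeasurableSpace α] (s : Finset α) : Measure α :=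
  (s.card : ENNReal)⁻¹ • ∑ a ∈ s, Measure.dirac a

/-- Total variation distance between two measures. -/
def tvDist {α : Type*} [MeasurableSpace α] (μ ν : Measure α) : ℝ :=
  ⨆ A : {A : Set α // MeasurableSet A}, ((μ A).toReal - (ν A).toReal)

/-- The set `M_n` of nonnegative `n × 2` matrices with row sums `2` and column sums `n`. -/
def MSet (n : ℕ) : Set (Fin n × Fin 2 → ℝ) :=
  {x | (∀ p, 0 ≤ x p) ∧ (∀ i : Fin n, x (i, 0) + x (i, 1) = 2) ∧
    (∀ j : Fin 2, ∑ i : Fin n, x (i, j) = n)}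

/-- The uniform (normalized `(n-1)`-dimensional Hausdorff) measure on `M_n`. -/
def UM (n : ℕ) : Measure (Fin n × Fin 2 → ℝ) :=
  (μH[(n : ℝ) - 1] (MSet n))⁻¹ • (μH[(n : ℝ) - 1]).restrict (MSet n)

/-- One step of the Gibbs sampler on `M_n`, updating the pair of rows `u.1 = (i, j)`
using the uniform variable `u.2 = λ`. -/
def stepM (n : ℕ) (x : Fin n × Fin 2 → ℝ) (u : (Fin n × Fin n) × ℝ) :
    Fin n × Fin 2 → ℝ := fun p =>
  let i := u.1.1
  let j := u.1.2
  let l := u.2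
  let d := 2 - x (i, 0) - x (j, 0)
  if p = (i, 0) then (if 0 ≤ d then l * (2 - d) else 2 * l - (1 - l) * d)
  else if p = (j, 0) then (if 0 ≤ d then (1 - l) * (2 - d) else 2 * (1 - l) - l * d)
  else if p = (i, 1) then (if 0 ≤ d then 2 * (1 - l) + l * d else (1 - l) * (2 + d))
  else if p = (j, 1) then (if 0 ≤ d then 2 * l + (1 - l) * d else l * (2 + d))
  else x p

/-- The set of ordered pairs `(i, j)` with `i < j`. -/
def pairsF (n : ℕ) : Finset (Fin n × Fin n) := Finset.univ.filter fun p => p.1 < p.2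

/-- Law of the random update datum: `(i, j)` uniform among pairs `i < j`, and
`λ` uniform on `[0,1]`. -/
def driveM (n : ℕ) : Measure ((Fin n × Fin n) × ℝ) :=
  (unifOn (pairsF n)).prod ((volume : Measure ℝ).restrict (Set.Icc 0 1))

/-- Law of the Gibbs sampler on `M_n` after `T` steps started at `x`. -/
def lawM (n : ℕ) (x : Fin n × Fin 2 → ℝ) (T : ℕ) : Measure (Fin n × Fin 2 → ℝ) :=
  Measure.map (fun ω : Fin T → (Fin n × Fin n) × ℝ => (List.ofFn ω).foldl (stepM n) x)
    (Measure.pi fun _ => driveM n)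

/-- Law of the `(T+1)`-step path of the Gibbs sampler on `M_n` with initial distribution `μ`. -/
def pathM (n T : ℕ) (μ : Measure (Fin n × Fin 2 → ℝ)) :
    Measure (Fin (T + 1) → Fin n × Fin 2 → ℝ) :=
  Measure.map (fun p : (Fin n × Fin 2 → ℝ) × (Fin T → (Fin n × Fin n) × ℝ) =>
      fun s : Fin (T + 1) => ((List.ofFn p.2).take s).foldl (stepM n) p.1)
    (μ.prod (Measure.pi fun _ => driveM n))

/-
The Gibbs step on rows `i` and `j` replaces a matrix by a uniform point of the chord of `M_n`
through it in a fixed direction. Such a move preserves the uniform measure: pairing `x` with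
`y = x + r v` and weighting by the inverse length of their common chord is symmetric in `x` and `y`,
by translation invariance of Hausdorff measure on the affine space spanned by `M_n`. Hence every
step of the chain is again uniform on `M_n`.

Stationarity also bounds the entries. If `x[i,b] + x[j,b] ≥ 1`, then resampling rows `i` and `j`
leaves the sum unchanged and makes the new `x[i,b]` uniform on an interval of length at least `1`
in the nonnegative reals, so it is at most `ε` with probability at most `ε`. As column `b` has mean
`1`, an entry `x[i,b] ≤ 1` always has such a partner `j`, and a union bound over `j` gives
`P[x[i,b] ≤ ε] ≤ n ε`; row sums turn this into the bound for entries near `2`. A union bound over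
the `2 n` entries and `T + 1` times gives `2 n² (T + 1) ε`, which for `T + 1 = n²` and
`ε = n^(-5.5-k)` is `2 n^(-1.5-k)`.
-/

section LineResampling

lemma volume_restrict_unitInterval_lineMap_mem {a b : ℝ} (hab : a < b) (S : Set ℝ) :
    volume.restrict (Set.Icc (0 : ℝ) 1) {l | AffineMap.lineMap a b l ∈ S} =
      (volume (Set.Icc a b))⁻¹ * volume (Set.Icc a b ∩ S) := by
  have hpre : {l : ℝ | AffineMap.lineMap a b l ∈ S} ∩ Set.Icc 0 1 =
      (· * (b - a)) ⁻¹' ((· + a) ⁻¹' (Set.Icc a b ∩ S)) := by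
    ext l
    have hmem : AffineMap.lineMap a b l ∈ Set.Icc a b ↔ l ∈ Set.Icc (0 : ℝ) 1 :=
      and_congr (left_le_lineMap_iff_nonneg hab) (lineMap_le_right_iff_le_one hab)
    rw [AffineMap.lineMap_apply_ring'] at hmem
    simp only [AffineMap.lineMap_apply_ring', Set.mem_inter_iff, Set.mem_ofPred_eq,
      Set.mem_preimage, hmem, and_comm]
  have hlen : 0 < b - a := sub_pos.2 hab
  rw [Measure.restrict_apply' measurableSet_Icc, hpre, Real.volume_preimage_mul_right hlen.ne',
    measure_preimage_add_right, abs_inv, abs_of_pos hlen, ENNReal.ofReal_inv_of_pos hlen,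
    Real.volume_Icc]

variable {X : Type*} [AddCommGroup X] [Module ℝ X]

/-- The parameters `r` for which the point `x + r • v` of the line through `x` with direction `v`
lies in `M`. -/
def chord (v : X) (M : Set X) (x : X) : Set ℝ := (fun r : ℝ => x + r • v) ⁻¹' M

lemma mem_chord {v : X} {M : Set X} {x : X} {r : ℝ} : r ∈ chord v M x ↔ x + r • v ∈ M := Iff.rfl

lemma volume_chord_add_smul (v : X) (M : Set X) (r : ℝ) (x : X) :
    volume (chord v M (x + r • v)) = volume (chord v M x) := by
  have : chord v M (x + r • v) = (r + ·) ⁻¹' chord v M x := by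
    ext s
    simp only [mem_chord, Set.mem_preimage, add_smul, add_assoc]
  rw [this, measure_preimage_add]

variable {v : X} {M : Set X} {x : X}

lemma volume_restrict_add_lineMap_smul_mem {a b : ℝ} (hchord : chord v M x = Set.Icc a b)
    (hpos : volume (chord v M x) ≠ 0) (B : Set X) :
    volume.restrict (Set.Icc (0 : ℝ) 1) {l | x + AffineMap.lineMap a b l • v ∈ B} =
      (volume (chord v M x))⁻¹ * volume (chord v (M ∩ B) x) := by
  have hab : a < b := by simpa [hchord] using hpos
  have hinter : chord v (M ∩ B) x = Set.Icc a b ∩ chord v B x := by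
    rw [← hchord]; rfl
  rw [hinter, hchord]
  exact volume_restrict_unitInterval_lineMap_mem hab (chord v B x)

lemma add_lineMap_smul_eq_self {a b : ℝ} (hx : x ∈ M) (hchord : chord v M x = Set.Icc a b)
    (hzero : volume (chord v M x) = 0) (l : ℝ) : x + AffineMap.lineMap a b l • v = x := by
  have h0 : (0 : ℝ) ∈ Set.Icc a b := by
    rw [← hchord, mem_chord, zero_smul, add_zero]; exact hx
  have hba : b ≤ a := by simpa [hchord] using hzero
  obtain rfl : a = 0 := le_antisymm h0.1 (h0.2.trans hba)
  obtain rfl : b = 0 := le_antisymm hba h0.2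
  simp

lemma inv_volume_chord_mul_volume_chord_diff (hfin : volume (chord v M x) ≠ ⊤) :
    (volume (chord v M x))⁻¹ * volume (chord v (M \ {y | volume (chord v M y) = 0}) x) =
      {y | volume (chord v M y) = 0}ᶜ.indicator 1 x := by
  by_cases hzero : volume (chord v M x) = 0
  · have hempty : chord v (M \ {y | volume (chord v M y) = 0}) x = ∅ := by
      ext r; simp [mem_chord, volume_chord_add_smul, hzero]
    simp [hempty, hzero]
  · have hdiff : chord v (M \ {y | volume (chord v M y) = 0}) x = chord v M x := by
      ext r; simp [mem_chord, volume_chord_add_smul, hzero]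
    rw [hdiff, ENNReal.inv_mul_cancel hzero hfin]
    simp [hzero]

variable [MeasurableSpace X] [MeasurableAdd₂ X] [MeasurableSMul₂ ℝ X] {μ : Measure X}

lemma measurable_volume_chord (v : X) (hM : MeasurableSet M) :
    Measurable fun x => volume (chord v M x) := by
  have hline : Measurable fun p : X × ℝ => p.1 + p.2 • v := by fun_prop
  exact measurable_measure_prodMk_left (hline hM)

lemma volume_chord_eq_lintegral (v : X) (hM : MeasurableSet M) (x : X) :
    volume (chord v M x) = ∫⁻ r : ℝ, M.indicator 1 (x + r • v) := by
  have hline : Measurable fun r : ℝ => x + r • v := by fun_prop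
  exact (lintegral_indicator_one (hline hM)).symm

variable [SFinite μ]

lemma lintegral_mul_volume_chord_comm (hμ : ∀ r : ℝ, MeasurePreserving (· + r • v) μ μ)
    {A B : Set X} (hA : MeasurableSet A) (hB : MeasurableSet B) {W : X → ENNReal}
    (hW : Measurable W) (hWv : ∀ (r : ℝ) x, W (x + r • v) = W x) :
    ∫⁻ x in A, W x * volume (chord v B x) ∂μ = ∫⁻ x in B, W x * volume (chord v A x) ∂μ := by
  have unfold_chord {C D : Set X} (hC : MeasurableSet C) (hD : MeasurableSet D) :
      ∫⁻ x in C, W x * volume (chord v D x) ∂μ =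
        ∫⁻ r : ℝ, ∫⁻ x, C.indicator W x * D.indicator 1 (x + r • v) ∂μ := by
    have hmeas : Measurable fun p : X × ℝ =>
        C.indicator W p.1 * D.indicator (1 : X → ENNReal) (p.1 + p.2 • v) :=
      ((hW.indicator hC).comp measurable_fst).mul
        ((measurable_one.indicator hD).comp (by fun_prop))
    rw [← lintegral_lintegral_swap hmeas.aemeasurable, ← lintegral_indicator hC]
    refine lintegral_congr fun x => ?_
    have hline : Measurable fun r : ℝ => x + r • v := by fun_prop
    have hind : Measurable fun r : ℝ => D.indicator (1 : X → ENNReal) (x + r • v) :=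
      (measurable_one.indicator hD).comp hline
    rw [lintegral_const_mul _ hind, ← volume_chord_eq_lintegral v hD]
    exact Set.indicator_mul_left ..
  rw [unfold_chord hA hB, unfold_chord hB hA, ← lintegral_neg_eq_self]
  refine lintegral_congr fun r => ?_
  have hmeas : Measurable fun x => A.indicator W x * B.indicator (1 : X → ENNReal) (x + -r • v) :=
    (hW.indicator hA).mul ((measurable_one.indicator hB).comp (by fun_prop))
  rw [← (hμ r).lintegral_comp hmeas]
  refine lintegral_congr fun x => ?_
  rw [show x + r • v + -r • v = x by module]
  by_cases hxB : x ∈ B <;> by_cases hxA : x + r • v ∈ A <;> simp [hxA, hxB, hWv]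

theorem measurePreserving_add_lineMap_smul (hμ : ∀ r : ℝ, MeasurePreserving (· + r • v) μ μ)
    (hM : MeasurableSet M) {a b : X → ℝ} (ha : Measurable a) (hb : Measurable b)
    (hchord : ∀ x ∈ M, chord v M x = Set.Icc (a x) (b x)) :
    MeasurePreserving (fun p : X × ℝ => p.1 + AffineMap.lineMap (a p.1) (b p.1) p.2 • v)
      ((μ.restrict M).prod (volume.restrict (Set.Icc 0 1))) (μ.restrict M) := by
  have hmeas : Measurable fun p : X × ℝ =>
      p.1 + AffineMap.lineMap (a p.1) (b p.1) p.2 • v := by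
    simp only [AffineMap.lineMap_apply_ring']
    fun_prop
  refine ⟨hmeas, Measure.ext fun B hB => ?_⟩
  rw [Measure.map_apply hmeas hB, Measure.prod_apply (hmeas hB)]
  change ∫⁻ x in M, volume.restrict (Set.Icc (0 : ℝ) 1)
    {l | x + AffineMap.lineMap (a x) (b x) l • v ∈ B} ∂μ = μ.restrict M B
  set D : Set X := {y | volume (chord v M y) = 0}
  have hD : MeasurableSet D := measurable_volume_chord v hM (measurableSet_singleton 0)
  have degenerate : ∫⁻ x in M ∩ D, volume.restrict (Set.Icc (0 : ℝ) 1)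
      {l | x + AffineMap.lineMap (a x) (b x) l • v ∈ B} ∂μ = μ ((M ∩ B) ∩ D) := by
    rw [Set.inter_right_comm, Set.inter_comm (M ∩ D), ← Measure.restrict_apply hB,
      ← lintegral_indicator_one hB]
    refine setLIntegral_congr_fun (hM.inter hD) fun x ⟨hxM, hxD⟩ => ?_
    simp only [add_lineMap_smul_eq_self hxM (hchord x hxM) hxD]
    by_cases hxB : x ∈ B <;> simp [hxB]
  have nondegenerate : ∫⁻ x in M \ D, volume.restrict (Set.Icc (0 : ℝ) 1)
      {l | x + AffineMap.lineMap (a x) (b x) l • v ∈ B} ∂μ = μ ((M ∩ B) \ D) := by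
    have hfin : ∀ x ∈ M, volume (chord v M x) ≠ ⊤ := fun x hx => by
      rw [hchord x hx]; exact measure_Icc_lt_top.ne
    calc
      _ = ∫⁻ x in M \ D, (volume (chord v M x))⁻¹ * volume (chord v (M ∩ B) x) ∂μ :=
        setLIntegral_congr_fun (hM.diff hD) fun x hx =>
          volume_restrict_add_lineMap_smul_mem (hchord x hx.1) hx.2 B
      _ = ∫⁻ x in M ∩ B, (volume (chord v M x))⁻¹ * volume (chord v (M \ D) x) ∂μ :=
        lintegral_mul_volume_chord_comm hμ (hM.diff hD) (hM.inter hB)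
          (measurable_volume_chord v hM).inv fun r x => by rw [volume_chord_add_smul]
      _ = ∫⁻ x in M ∩ B, Dᶜ.indicator 1 x ∂μ :=
        setLIntegral_congr_fun (hM.inter hB) fun x hx =>
          inv_volume_chord_mul_volume_chord_diff (hfin x hx.1)
      _ = μ ((M ∩ B) \ D) := by
        rw [lintegral_indicator_one hD.compl, Measure.restrict_apply hD.compl, Set.inter_comm]
        rfl
  rw [← lintegral_inter_add_sdiff _ M hD, degenerate, nondegenerate,
    measure_inter_add_sdiff _ hD, Measure.restrict_apply hB, Set.inter_comm]

end LineResampling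

section RandomIteration

lemma measure_le_of_measurePreserving_prod {X Y Z : Type*} [MeasurableSpace X] [MeasurableSpace Y]
    [MeasurableSpace Z] {μ : Measure X}
    [IsZeroOrProbabilityMeasure μ] {ν : Measure Y} [SFinite ν] {ρ : Measure Z}
    {f : X → Y → Z} (hf : MeasurePreserving f.uncurry (μ.prod ν) ρ) {B : Set Z}
    (hB : MeasurableSet B) {a : ENNReal}
    (h : ∀ᵐ x ∂μ, ν {y | f x y ∈ B} ≤ a) : ρ B ≤ a := by
  calc
    ρ B = ∫⁻ x, ν {y | f x y ∈ B} ∂μ := by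
      rw [← hf.measure_preimage hB.nullMeasurableSet, Measure.prod_apply (hf.measurable hB)]
      rfl
    _ ≤ ∫⁻ _, a ∂μ := lintegral_mono_ae h
    _ ≤ a := by
      rw [lintegral_const]
      exact mul_le_of_le_one_right' prob_le_one

lemma isProbabilityMeasure_unifOn {α : Type*} [MeasurableSpace α] {s : Finset α}
    (hs : s.Nonempty) : IsProbabilityMeasure (unifOn s) where
  measure_univ := by
    simp only [unifOn, Measure.smul_apply, Measure.finsetSum_apply, measure_univ,
      Finset.sum_const, smul_eq_mul, nsmul_eq_mul, mul_one]
    exact ENNReal.inv_mul_cancel (by simpa using hs.ne_empty) (by simp)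

lemma measurePreserving_prod_unifOn {α X Y : Type*} [MeasurableSpace α] [MeasurableSpace X]
    [MeasurableSpace Y] {s : Finset α} (hs : s.Nonempty) {μ : Measure X} {ν : Measure Y} [SFinite μ]
    {f : X → α → Y} (hf : Measurable f.uncurry)
    (h : ∀ c ∈ s, MeasurePreserving (f · c) μ ν) :
    MeasurePreserving f.uncurry (μ.prod (unifOn s)) ν := by
  have := isProbabilityMeasure_unifOn hs
  refine ⟨hf, Measure.ext fun B hB => ?_⟩
  rw [Measure.map_apply hf hB, Measure.prod_apply_symm (hf hB)]
  have slice : ∀ c ∈ s, μ ((f · c) ⁻¹' B) = ν B := fun c hc =>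
    (h c hc).measure_preimage hB.nullMeasurableSet
  have hmeas : Measurable fun c => μ ((f · c) ⁻¹' B) := measurable_measure_prodMk_right (hf hB)
  change ∫⁻ c, μ ((f · c) ⁻¹' B) ∂unifOn s = ν B
  calc
    _ = (s.card : ENNReal)⁻¹ * ∑ c ∈ s, μ ((f · c) ⁻¹' B) := by
      simp only [unifOn, lintegral_smul_measure, lintegral_finsetSum_measure, smul_eq_mul,
        lintegral_dirac' _ hmeas]
    _ = (s.card : ENNReal)⁻¹ * (s.card * ν B) := by
      rw [Finset.sum_congr rfl slice, Finset.sum_const, nsmul_eq_mul]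
    _ = ν B := by
      rw [← mul_assoc, ENNReal.inv_mul_cancel (by simpa using hs.ne_empty) (by simp), one_mul]

variable {X Ω : Type*} [MeasurableSpace X] [MeasurableSpace Ω] {μ : Measure X} [SFinite μ]
  {P : Measure Ω} [IsProbabilityMeasure P] {Φ : X → Ω → X}

theorem measurePreserving_foldl_take (hΦ : MeasurePreserving Φ.uncurry (μ.prod P) μ) {T t : ℕ}
    (ht : t ≤ T) :
    MeasurePreserving (fun p : X × (Fin T → Ω) => ((List.ofFn p.2).take t).foldl Φ p.1)
      (μ.prod (Measure.pi fun _ => P)) μ := by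
  induction T generalizing t with
  | zero =>
    obtain rfl : t = 0 := Nat.le_zero.1 ht
    exact measurePreserving_fst
  | succ T ih =>
    cases t with
    | zero => exact measurePreserving_fst
    | succ t =>
      have split_first := (MeasurePreserving.id μ).prod
        (measurePreserving_piFinSuccAbove (fun _ : Fin (T + 1) => P) 0)
      have reassoc := (measurePreserving_prodAssoc μ P (Measure.pi fun _ : Fin T => P)).symm
      have first_step := hΦ.prod (MeasurePreserving.id (Measure.pi fun _ : Fin T => P))
      convert (ih (Nat.le_of_succ_le_succ ht)).comp
        (first_step.comp (reassoc.comp split_first)) using 1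
      funext p
      rw [List.ofFn_succ]
      rfl

theorem measure_exists_foldl_take_mem_le (hΦ : MeasurePreserving Φ.uncurry (μ.prod P) μ) (T : ℕ)
    {ι : Type*} [Fintype ι] {F : ι → Set X} {a : ENNReal} (hF : ∀ q, μ (F q) ≤ a) :
    (μ.prod (Measure.pi fun _ : Fin T => P))
        {p | ∃ q, ∃ t ≤ T, ((List.ofFn p.2).take t).foldl Φ p.1 ∈ F q} ≤
      Fintype.card ι * ((T + 1) * a) := by
  have hunion : {p : X × (Fin T → Ω) | ∃ q, ∃ t ≤ T, ((List.ofFn p.2).take t).foldl Φ p.1 ∈ F q} =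
      ⋃ q, ⋃ t ∈ Finset.range (T + 1), {p | ((List.ofFn p.2).take t).foldl Φ p.1 ∈ F q} := by
    ext p
    simp
  calc
    _ ≤ ∑ q, ∑ t ∈ Finset.range (T + 1), (μ.prod (Measure.pi fun _ : Fin T => P))
        {p | ((List.ofFn p.2).take t).foldl Φ p.1 ∈ F q} := by
      rw [hunion]
      exact (measure_iUnion_fintype_le _ _).trans
        (Finset.sum_le_sum fun q _ => measure_biUnion_finset_le _ _)
    _ ≤ ∑ _q : ι, ∑ _t ∈ Finset.range (T + 1), a := by
      gcongr with q _ t ht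
      exact ((measurePreserving_foldl_take hΦ (Finset.mem_range_succ_iff.1 ht)).measure_preimage_le
        (F q)).trans (hF q)
    _ = Fintype.card ι * ((T + 1) * a) := by simp

end RandomIteration

section HausdorffMeasure

variable {E : Type*} [NormedAddCommGroup E] [NormedSpace ℝ E] [MeasurableSpace E] [BorelSpace E]

lemma sFinite_hausdorffMeasure [FiniteDimensional ℝ E] {d : ℕ} (hd : Module.finrank ℝ E ≤ d) :
    SFinite (μH[d] : Measure E) := by
  obtain hlt | rfl := hd.lt_or_eq
  · rw [Real.hausdorffMeasure_of_finrank_lt (Nat.cast_lt.2 hlt)]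
    infer_instance
  · infer_instance

lemma sFinite_hausdorffMeasure_restrict (s : AffineSubspace ℝ E)
    [FiniteDimensional ℝ s.direction] {d : ℕ} (hd : Module.finrank ℝ s.direction ≤ d) :
    SFinite ((μH[d] : Measure E).restrict s) := by
  obtain rfl | ⟨p, hp⟩ := s.eq_bot_or_nonempty
  · simp only [AffineSubspace.bot_coe, Measure.restrict_empty]
    infer_instance
  have hrange : Set.range (fun w : s.direction => (w : E) + p) = s := by
    ext x
    rw [Set.mem_range]
    constructor
    · rintro ⟨w, rfl⟩
      exact AffineSubspace.vadd_mem_of_mem_direction w.2 hp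
    · exact fun hx => ⟨⟨x - p, AffineSubspace.vsub_mem_direction hx hp⟩, sub_add_cancel x p⟩
  have hiso : Isometry fun w : s.direction => (w : E) + p :=
    (IsometryEquiv.addRight p).isometry.comp isometry_subtype_coe
  have := sFinite_hausdorffMeasure hd
  rw [← hrange, ← hiso.map_hausdorffMeasure (Or.inl d.cast_nonneg)]
  infer_instance

lemma measurePreserving_add_right_hausdorffMeasure_restrict {s : AffineSubspace ℝ E}
    (hs : MeasurableSet (s : Set E)) {w : E} (hw : w ∈ s.direction) (d : ℝ) :
    MeasurePreserving (· + w) ((μH[d] : Measure E).restrict s) ((μH[d]).restrict s) := by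
  have hpre : IsometryEquiv.addRight w ⁻¹' (s : Set E) = s := by
    ext x
    rw [Set.mem_preimage, IsometryEquiv.addRight_apply, add_comm]
    exact AffineSubspace.vadd_mem_iff_mem_of_mem_direction hw
  have := ((IsometryEquiv.addRight w).measurePreserving_hausdorffMeasure d).restrict_preimage hs
  rwa [hpre] at this

end HausdorffMeasure

section Margins

/-- The real `n × 2` matrices with all row and column sums zero. -/
def zeroMargins (n : ℕ) : Submodule ℝ (Fin n × Fin 2 → ℝ) :=
  (⨅ i, LinearMap.ker (LinearMap.proj (R := ℝ) (φ := fun _ => ℝ) (i, 0) + LinearMap.proj (i, 1))) ⊓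
    ⨅ j, LinearMap.ker (∑ i, LinearMap.proj (R := ℝ) (φ := fun _ => ℝ) (i, j))

/-- The real `n × 2` matrices with row sums `2` and column sums `n`, as the translate of
`zeroMargins n` through the all-ones matrix; its nonnegative points form `MSet n`. -/
def marginsSpace (n : ℕ) : AffineSubspace ℝ (Fin n × Fin 2 → ℝ) :=
  AffineSubspace.mk' 1 (zeroMargins n)

variable {n : ℕ} {x : Fin n × Fin 2 → ℝ}

lemma mem_zeroMargins :
    x ∈ zeroMargins n ↔ (∀ i, x (i, 0) + x (i, 1) = 0) ∧ ∀ j, ∑ i, x (i, j) = 0 := by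
  simp [zeroMargins]

lemma mem_marginsSpace :
    x ∈ marginsSpace n ↔ (∀ i, x (i, 0) + x (i, 1) = 2) ∧ ∀ j, ∑ i, x (i, j) = n := by
  simp only [marginsSpace, AffineSubspace.mem_mk', vsub_eq_sub, mem_zeroMargins, Pi.sub_apply,
    Pi.one_apply, Finset.sum_sub_distrib, Finset.sum_const, Finset.card_univ, Fintype.card_fin,
    nsmul_one, sub_eq_zero]
  refine and_congr_left' (forall_congr' fun i => ?_)
  constructor <;> intro h <;> linarith

lemma direction_marginsSpace (n : ℕ) : (marginsSpace n).direction = zeroMargins n :=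
  AffineSubspace.direction_mk' _ _

lemma mem_MSet_iff : x ∈ MSet n ↔ (∀ p, 0 ≤ x p) ∧ x ∈ marginsSpace n := by
  rw [mem_marginsSpace]; rfl

lemma finrank_zeroMargins_le (n : ℕ) : Module.finrank ℝ (zeroMargins n) ≤ n - 1 := by
  obtain _ | m := n
  · exact (zeroMargins 0).finrank_le.trans (by simp)
  let firstColumnTail : zeroMargins (m + 1) →ₗ[ℝ] (Fin m → ℝ) :=
    (LinearMap.funLeft ℝ ℝ fun i : Fin m => (i.succ, (0 : Fin 2))).domRestrict _
  have hinj : Function.Injective firstColumnTail := by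
    rw [injective_iff_map_eq_zero]
    rintro ⟨x, hx⟩ htail
    obtain ⟨hrow, hcol⟩ := mem_zeroMargins.1 hx
    have hsucc (i : Fin m) : x (i.succ, 0) = 0 := congrFun htail i
    have hzero : x (0, 0) = 0 := by simpa [Fin.sum_univ_succ, hsucc] using hcol 0
    have hleft (i : Fin (m + 1)) : x (i, 0) = 0 := Fin.cases hzero hsucc i
    have hright (i : Fin (m + 1)) : x (i, 1) = 0 := by simpa [hleft] using hrow i
    ext ⟨i, j⟩
    exact Fin.cases (hleft i) (fun j => by rw [Fin.fin_one_eq_zero j]; exact hright i) j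
  simpa using LinearMap.finrank_le_finrank_of_injective hinj

lemma measurableSet_marginsSpace (n : ℕ) :
    MeasurableSet (marginsSpace n : Set (Fin n × Fin 2 → ℝ)) :=
  (AffineSubspace.closed_of_finiteDimensional _).measurableSet

lemma sFinite_hausdorffMeasure_restrict_marginsSpace (hn : 0 < n) :
    SFinite (μH[(n : ℝ) - 1].restrict (marginsSpace n : Set (Fin n × Fin 2 → ℝ))) := by
  rw [← Nat.cast_pred hn]
  refine sFinite_hausdorffMeasure_restrict _ ?_
  rw [direction_marginsSpace]
  exact finrank_zeroMargins_le n

lemma measurableSet_MSet (n : ℕ) : MeasurableSet (MSet n) := by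
  have hinter : MSet n = Set.Ici 0 ∩ marginsSpace n := Set.ext fun _ => mem_MSet_iff
  rw [hinter]
  exact measurableSet_Ici.inter (measurableSet_marginsSpace n)

lemma apply_add_apply_rev_of_mem_MSet (hx : x ∈ MSet n) (i : Fin n) (b : Fin 2) :
    x (i, b) + x (i, b.rev) = 2 := by
  fin_cases b
  · exact hx.2.1 i
  · exact (add_comm _ _).trans (hx.2.1 i)

end Margins

section Exchange

variable {n : ℕ} {i j : Fin n}

/-- The move of a Gibbs step on rows `i` and `j`: shift mass one from column `1` to column `0` in
row `i`, and from column `0` to column `1` in row `j`. -/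
def exchangeDir (i j : Fin n) : Fin n × Fin 2 → ℝ :=
  Pi.single (i, 0) 1 - Pi.single (i, 1) 1 - Pi.single (j, 0) 1 + Pi.single (j, 1) 1

/-- The least multiple of `exchangeDir i j` that can be added to `x` while keeping its entries
nonnegative. -/
def exchangeMin (i j : Fin n) (x : Fin n × Fin 2 → ℝ) : ℝ := max (-x (i, 0)) (-x (j, 1))

/-- The greatest multiple of `exchangeDir i j` that can be added to `x` while keeping its entries
nonnegative. -/
def exchangeMax (i j : Fin n) (x : Fin n × Fin 2 → ℝ) : ℝ := min (x (i, 1)) (x (j, 0))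

lemma exchangeDir_apply_zero (i j a : Fin n) :
    exchangeDir i j (a, 0) = (Pi.single i 1 - Pi.single j 1 : Fin n → ℝ) a := by
  simp [exchangeDir, Pi.single_apply, Prod.ext_iff]

lemma exchangeDir_apply_one (i j a : Fin n) :
    exchangeDir i j (a, 1) = (Pi.single j 1 - Pi.single i 1 : Fin n → ℝ) a := by
  simp [exchangeDir, Pi.single_apply, Prod.ext_iff, neg_add_eq_sub]

lemma exchangeDir_mem_zeroMargins (i j : Fin n) : exchangeDir i j ∈ zeroMargins n := by
  rw [mem_zeroMargins]
  simp [Fin.forall_fin_two, exchangeDir_apply_zero, exchangeDir_apply_one]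

lemma smul_exchangeDir_mem_direction (r : ℝ) (i j : Fin n) :
    r • exchangeDir i j ∈ (marginsSpace n).direction := by
  rw [direction_marginsSpace]
  exact Submodule.smul_mem _ r (exchangeDir_mem_zeroMargins i j)

lemma nonneg_add_smul_exchangeDir_iff {x : Fin n × Fin 2 → ℝ} (hx : ∀ p, 0 ≤ x p) (hij : i ≠ j)
    (r : ℝ) : (∀ p, 0 ≤ (x + r • exchangeDir i j) p) ↔
      r ∈ Set.Icc (exchangeMin i j x) (exchangeMax i j x) := by
  have hcoord : (∀ p, 0 ≤ (x + r • exchangeDir i j) p) ↔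
      0 ≤ x (i, 0) + r ∧ 0 ≤ x (i, 1) - r ∧ 0 ≤ x (j, 0) - r ∧ 0 ≤ x (j, 1) + r := by
    simp only [Prod.forall, Fin.forall_fin_two, Pi.add_apply, Pi.smul_apply, smul_eq_mul,
      exchangeDir_apply_zero, exchangeDir_apply_one, Pi.sub_apply]
    constructor
    · intro h
      simpa [hij, hij.symm, sub_eq_add_neg, and_assoc] using And.intro (h i) (h j)
    · rintro ⟨hi0, hi1, hj0, hj1⟩ a
      obtain rfl | hai := eq_or_ne a i
      · simpa [hij, sub_eq_add_neg] using And.intro hi0 hi1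
      obtain rfl | haj := eq_or_ne a j
      · simpa [hai, sub_eq_add_neg] using And.intro hj0 hj1
      · simpa [hai, haj] using And.intro (hx (a, 0)) (hx (a, 1))
  rw [hcoord, exchangeMin, exchangeMax, Set.mem_Icc, max_le_iff, le_min_iff]
  grind

lemma chord_exchangeDir_MSet {x : Fin n × Fin 2 → ℝ} (hx : x ∈ MSet n) (hij : i ≠ j) :
    chord (exchangeDir i j) (MSet n) x = Set.Icc (exchangeMin i j x) (exchangeMax i j x) := by
  obtain ⟨hnonneg, hmargins⟩ := mem_MSet_iff.1 hx
  ext r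
  have hline : x + r • exchangeDir i j ∈ marginsSpace n := by
    rw [add_comm]
    exact AffineSubspace.vadd_mem_of_mem_direction (smul_exchangeDir_mem_direction r i j) hmargins
  rw [mem_chord, mem_MSet_iff, and_iff_left hline, nonneg_add_smul_exchangeDir_iff hnonneg hij]

lemma stepM_eq_add_smul_exchangeDir {x : Fin n × Fin 2 → ℝ} (hx : x ∈ MSet n) (hij : i ≠ j)
    (l : ℝ) : stepM n x ((i, j), l) =
      x + AffineMap.lineMap (exchangeMin i j x) (exchangeMax i j x) l • exchangeDir i j := by
  have hi : x (i, 1) = 2 - x (i, 0) := eq_sub_of_add_eq' (hx.2.1 i)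
  have hj : x (j, 1) = 2 - x (j, 0) := eq_sub_of_add_eq' (hx.2.1 j)
  funext ⟨a, b⟩
  simp only [stepM, Prod.mk.injEq, AffineMap.lineMap_apply_ring', Pi.add_apply, Pi.smul_apply,
    smul_eq_mul]
  obtain hd | hd := le_or_gt 0 (2 - x (i, 0) - x (j, 0))
  · have hmin : exchangeMin i j x = -x (i, 0) := max_eq_left (by linarith)
    have hmax : exchangeMax i j x = x (j, 0) := min_eq_right (by linarith)
    simp only [hmin, hmax, if_pos hd]
    fin_cases b <;> grind [exchangeDir_apply_zero, exchangeDir_apply_one, Pi.sub_apply]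
  · have hmin : exchangeMin i j x = -x (j, 1) := max_eq_right (by linarith)
    have hmax : exchangeMax i j x = x (i, 1) := min_eq_left (by linarith)
    simp only [hmin, hmax, if_neg hd.not_ge]
    fin_cases b <;> grind [exchangeDir_apply_zero, exchangeDir_apply_one, Pi.sub_apply]

lemma measurable_exchangeMin (i j : Fin n) : Measurable (exchangeMin i j) := by
  unfold exchangeMin
  fun_prop

lemma measurable_exchangeMax (i j : Fin n) : Measurable (exchangeMax i j) := by
  unfold exchangeMax
  fun_prop

end Exchange

section Stationarity

variable {n : ℕ} {i j : Fin n}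

instance : IsZeroOrProbabilityMeasure (UM n) :=
  inferInstanceAs (IsZeroOrProbabilityMeasure (ProbabilityTheory.cond μH[(n : ℝ) - 1] (MSet n)))

lemma ae_UM_mem_MSet (n : ℕ) : ∀ᵐ x ∂UM n, x ∈ MSet n :=
  ProbabilityTheory.ae_cond_mem (measurableSet_MSet n)

lemma measurable_stepM_pair (c : Fin n × Fin n) :
    Measurable fun p : (Fin n × Fin 2 → ℝ) × ℝ => stepM n p.1 (c, p.2) := by
  refine measurable_pi_lambda _ fun q => ?_
  have hcase : MeasurableSet
      {p : (Fin n × Fin 2 → ℝ) × ℝ | 0 ≤ 2 - p.1 (c.1, 0) - p.1 (c.2, 0)} :=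
    measurableSet_le (by fun_prop) (by fun_prop)
  unfold stepM
  dsimp only
  split_ifs
  any_goals exact Measurable.ite hcase (by fun_prop) (by fun_prop)
  fun_prop

lemma measurePreserving_stepM_pair (hij : i ≠ j) :
    MeasurePreserving (fun p : (Fin n × Fin 2 → ℝ) × ℝ => stepM n p.1 ((i, j), p.2))
      ((UM n).prod (volume.restrict (Set.Icc 0 1))) (UM n) := by
  have := sFinite_hausdorffMeasure_restrict_marginsSpace i.pos
  have hresample := measurePreserving_add_lineMap_smul
    (fun r => measurePreserving_add_right_hausdorffMeasure_restrict (measurableSet_marginsSpace n)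
      (smul_exchangeDir_mem_direction r i j) (n - 1))
    (measurableSet_MSet n) (measurable_exchangeMin i j) (measurable_exchangeMax i j)
    fun x hx => chord_exchangeDir_MSet hx hij
  rw [Measure.restrict_restrict_of_subset fun x hx => (mem_MSet_iff.1 hx).2] at hresample
  have hscaled := hresample.smul_measure (μH[(n : ℝ) - 1] (MSet n))⁻¹
  rw [← Measure.prod_smul_left] at hscaled
  refine hscaled.congr (measurable_stepM_pair (i, j)) ?_
  filter_upwards [Measure.quasiMeasurePreserving_fst.ae (ae_UM_mem_MSet n)] with p hp
  exact (stepM_eq_add_smul_exchangeDir hp hij p.2).symm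

lemma pairsF_nonempty (hn : 2 ≤ n) : (pairsF n).Nonempty := by
  have := Fin.nontrivial_iff_two_le.2 hn
  obtain ⟨i, j, hij⟩ := exists_pair_lt (Fin n)
  exact ⟨(i, j), by simpa [pairsF] using hij⟩

lemma isProbabilityMeasure_driveM (hn : 2 ≤ n) : IsProbabilityMeasure (driveM n) := by
  have := isProbabilityMeasure_unifOn (pairsF_nonempty hn)
  have : IsProbabilityMeasure (volume.restrict (Set.Icc (0 : ℝ) 1)) := ⟨by simp⟩
  unfold driveM
  infer_instance

theorem measurePreserving_stepM (hn : 2 ≤ n) :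
    MeasurePreserving (stepM n).uncurry ((UM n).prod (driveM n)) (UM n) := by
  have := isProbabilityMeasure_unifOn (pairsF_nonempty hn)
  have hstep := measurePreserving_prod_unifOn (f := fun (p : (Fin n × Fin 2 → ℝ) × ℝ) c =>
    stepM n p.1 (c, p.2)) (μ := (UM n).prod (volume.restrict (Set.Icc 0 1))) (pairsF_nonempty hn)
    (measurable_from_prod_countable_left measurable_stepM_pair) fun c hc =>
      measurePreserving_stepM_pair (by simpa [pairsF] using hc : c.1 < c.2).ne
  have hswap := (MeasurePreserving.id (UM n)).prod
    (Measure.measurePreserving_swap (μ := unifOn (pairsF n))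
      (ν := volume.restrict (Set.Icc (0 : ℝ) 1)))
  exact hstep.comp ((measurePreserving_prodAssoc _ _ _).symm.comp hswap)

end Stationarity

section EntryBounds

variable {n : ℕ} {i j : Fin n} {x : Fin n × Fin 2 → ℝ}

lemma stepM_apply_add_stepM_apply (hx : x ∈ MSet n) (hij : i ≠ j) (l : ℝ) (b : Fin 2) :
    stepM n x ((i, j), l) (i, b) + stepM n x ((i, j), l) (j, b) = x (i, b) + x (j, b) := by
  have hdir : exchangeDir i j (i, b) + exchangeDir i j (j, b) = 0 := by
    fin_cases b <;> simp [exchangeDir_apply_zero, exchangeDir_apply_one, hij]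
  rw [stepM_eq_add_smul_exchangeDir hx hij]
  simp only [Pi.add_apply, Pi.smul_apply, smul_eq_mul]
  linear_combination AffineMap.lineMap (exchangeMin i j x) (exchangeMax i j x) l * hdir

lemma le_stepM_apply_zero (h : 1 ≤ x (i, 0) + x (j, 0)) {l : ℝ} (hl : l ∈ Set.Icc (0 : ℝ) 1) :
    l ≤ stepM n x ((i, j), l) (i, 0) := by
  obtain ⟨hl0, hl1⟩ := hl
  simp only [stepM, if_true]
  split_ifs <;> nlinarith

lemma one_sub_le_stepM_apply_one (hx : x ∈ MSet n) (hij : i ≠ j) (h : 1 ≤ x (i, 1) + x (j, 1))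
    {l : ℝ} (hl : l ∈ Set.Icc (0 : ℝ) 1) : 1 - l ≤ stepM n x ((i, j), l) (i, 1) := by
  obtain ⟨hl0, hl1⟩ := hl
  have hi := hx.2.1 i
  have hj := hx.2.1 j
  simp only [stepM, Prod.mk.injEq, one_ne_zero, and_false, if_false, hij, and_self, if_true]
  split_ifs <;> nlinarith

lemma volume_stepM_apply_le_le (hx : x ∈ MSet n) (hij : i ≠ j) (b : Fin 2)
    (h : 1 ≤ x (i, b) + x (j, b)) (ε : ℝ) :
    volume.restrict (Set.Icc (0 : ℝ) 1) {l | stepM n x ((i, j), l) (i, b) ≤ ε} ≤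
      ENNReal.ofReal ε := by
  rw [Measure.restrict_apply' measurableSet_Icc]
  fin_cases b
  · calc
      _ ≤ volume (Set.Icc 0 ε) := measure_mono fun l hl =>
        ⟨hl.2.1, (le_stepM_apply_zero h hl.2).trans hl.1⟩
      _ = ENNReal.ofReal ε := by simp
  · calc
      _ ≤ volume (Set.Icc (1 - ε) 1) := measure_mono fun l hl =>
        ⟨sub_le_comm.1 ((one_sub_le_stepM_apply_one hx hij h hl.2).trans hl.1), hl.2.2⟩
      _ = ENNReal.ofReal ε := by simp

lemma UM_entry_le_and_one_le_add_le (hij : i ≠ j) (b : Fin 2) (ε : ℝ) :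
    UM n {x | x (i, b) ≤ ε ∧ 1 ≤ x (i, b) + x (j, b)} ≤ ENNReal.ofReal ε := by
  have hB : MeasurableSet
      {x : Fin n × Fin 2 → ℝ | x (i, b) ≤ ε ∧ 1 ≤ x (i, b) + x (j, b)} := by
    measurability
  refine measure_le_of_measurePreserving_prod (f := fun x l => stepM n x ((i, j), l))
    (measurePreserving_stepM_pair hij) hB ?_
  filter_upwards [ae_UM_mem_MSet n] with x hx
  simp only [stepM_apply_add_stepM_apply hx hij]
  by_cases h : 1 ≤ x (i, b) + x (j, b)
  · simpa only [h, and_true] using volume_stepM_apply_le_le hx hij b h ε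
  · simp [h]

lemma exists_ne_one_le_of_mem_MSet (hx : x ∈ MSet n) (hn : 2 ≤ n) {b : Fin 2}
    (h : x (i, b) ≤ 1) : ∃ j, j ≠ i ∧ 1 ≤ x (j, b) := by
  have := Fin.nontrivial_iff_two_le.2 hn
  by_contra! hlt
  obtain ⟨k, hk⟩ := exists_ne i
  refine (hx.2.2 b).not_lt ?_
  calc
    ∑ a, x (a, b) < ∑ _a : Fin n, 1 := Finset.sum_lt_sum
      (fun a _ => (eq_or_ne a i).elim (fun ha => ha ▸ h) fun ha => (hlt a ha).le)
      ⟨k, Finset.mem_univ k, hlt k hk⟩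
    _ = n := by simp

lemma UM_entry_le_le (hn : 2 ≤ n) (q : Fin n × Fin 2) (ε : ℝ) :
    UM n {x | x q ≤ ε} ≤ n * ENNReal.ofReal ε := by
  obtain ⟨i, b⟩ := q
  obtain hε | hε := le_or_gt 1 ε
  · calc
      UM n {x | x (i, b) ≤ ε} ≤ 1 * 1 := by simpa using prob_le_one
      _ ≤ n * ENNReal.ofReal ε := by
        gcongr
        · exact_mod_cast one_le_two.trans hn
        · exact ENNReal.one_le_ofReal.2 hε
  have hcover : ∀ᵐ x ∂UM n, x ∈ {x | x (i, b) ≤ ε} →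
      x ∈ ⋃ j ∈ Finset.univ.erase i, {x | x (i, b) ≤ ε ∧ 1 ≤ x (i, b) + x (j, b)} := by
    filter_upwards [ae_UM_mem_MSet n] with x hx hxε
    obtain ⟨j, hji, hj⟩ := exists_ne_one_le_of_mem_MSet hx hn (hxε.trans hε.le)
    simp only [Set.mem_iUnion]
    exact ⟨j, by simpa using hji, hxε, hj.trans (le_add_of_nonneg_left (hx.1 _))⟩
  calc
    UM n {x | x (i, b) ≤ ε}
      ≤ ∑ j ∈ Finset.univ.erase i, UM n {x | x (i, b) ≤ ε ∧ 1 ≤ x (i, b) + x (j, b)} :=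
        (measure_mono_ae hcover).trans (measure_biUnion_finset_le _ _)
    _ ≤ ∑ _j ∈ Finset.univ.erase i, ENNReal.ofReal ε :=
      Finset.sum_le_sum fun j hj =>
        UM_entry_le_and_one_le_add_le (Finset.ne_of_mem_erase hj).symm b ε
    _ ≤ n * ENNReal.ofReal ε := by
      rw [Finset.sum_const, nsmul_eq_mul]
      gcongr
      simp

lemma UM_two_sub_le_entry_le (hn : 2 ≤ n) (q : Fin n × Fin 2) (ε : ℝ) :
    UM n {x | 2 - ε ≤ x q} ≤ n * ENNReal.ofReal ε := by
  refine le_trans (measure_mono_ae ?_) (UM_entry_le_le hn (q.1, q.2.rev) ε)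
  filter_upwards [ae_UM_mem_MSet n] with x hx
  have hrow : x q + x (q.1, q.2.rev) = 2 := apply_add_apply_rev_of_mem_MSet hx q.1 q.2
  intro (hq : 2 - ε ≤ x q)
  change x (q.1, q.2.rev) ≤ ε
  linarith

end EntryBounds

theorem narrow_matrices_largeness_general (n T : ℕ) (hn : 2 ≤ n) (ε : ℝ) :
    ((UM n).prod (Measure.pi fun _ : Fin T => driveM n))
        {p | ∃ q : Fin n × Fin 2, ∃ t ≤ T, ((List.ofFn p.2).take t).foldl (stepM n) p.1 q ≤ ε} ≤
      ENNReal.ofReal (2 * n ^ 2 * (T + 1) * ε) ∧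
    ((UM n).prod (Measure.pi fun _ : Fin T => driveM n))
        {p | ∃ q : Fin n × Fin 2, ∃ t ≤ T, 2 - ε ≤ ((List.ofFn p.2).take t).foldl (stepM n) p.1 q} ≤
      ENNReal.ofReal (2 * n ^ 2 * (T + 1) * ε) := by
  have := isProbabilityMeasure_driveM hn
  have hbound : (Fintype.card (Fin n × Fin 2) : ENNReal) * ((T + 1) * (n * ENNReal.ofReal ε)) =
      ENNReal.ofReal (2 * n ^ 2 * (T + 1) * ε) := by
    have hcast : (2 * n ^ 2 * (T + 1) : ℝ) = (2 * n ^ 2 * (T + 1) : ℕ) := by push_cast; rfl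
    rw [hcast, ENNReal.ofReal_mul (Nat.cast_nonneg _), ENNReal.ofReal_natCast, Fintype.card_prod,
      Fintype.card_fin, Fintype.card_fin]
    push_cast
    ring
  rw [← hbound]
  exact ⟨measure_exists_foldl_take_mem_le (measurePreserving_stepM hn) T
      fun q => UM_entry_le_le hn q ε,
    measure_exists_foldl_take_mem_le (measurePreserving_stepM hn) T
      fun q => UM_two_sub_le_entry_le hn q ε⟩

lemma two_mul_sq_mul_sq_mul_rpow_le {n : ℕ} (hn : 1 ≤ n) (k : ℝ) :
    2 * (n : ℝ) ^ 2 * ((n ^ 2 - 1 : ℕ) + 1) * (n : ℝ) ^ (-5.5 - k) ≤ 2 * (n : ℝ) ^ (-k) := by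
  have hn1 : (1 : ℝ) ≤ n := Nat.one_le_cast.2 hn
  calc
    2 * (n : ℝ) ^ 2 * ((n ^ 2 - 1 : ℕ) + 1) * (n : ℝ) ^ (-5.5 - k)
      = 2 * ((n : ℝ) ^ (4 : ℝ) * (n : ℝ) ^ (-5.5 - k)) := by
        rw [Nat.cast_pred (by positivity), Nat.cast_pow, Real.rpow_ofNat]
        ring
    _ = 2 * (n : ℝ) ^ (-1.5 - k) := by
      rw [← Real.rpow_add (by linarith)]
      norm_num [add_sub]
    _ ≤ 2 * (n : ℝ) ^ (-k) := by
      gcongr 2 * ?_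
      exact Real.rpow_le_rpow_of_exponent_le hn1 (by linarith)

/-- Largeness lemma for narrow matrices: started from stationarity, over `n²` steps all
entries stay in `(n^{-5.5-k}, 2 - n^{-5.5-k})`, except with probability at most `2 n^{-k}`
for each of the two one-sided events. -/
theorem narrow_matrices_largeness
    (n : ℕ) (k : ℝ) (hk : 0 < k) (hn : max (2 * k) 4096 < (n : ℝ)) :
    ((UM n).prod (Measure.pi fun _ : Fin (n ^ 2 - 1) => driveM n))
        {p | ∃ q : Fin n × Fin 2, ∃ t ≤ n ^ 2 - 1,
          ((List.ofFn p.2).take t).foldl (stepM n) p.1 q ≤ (n : ℝ) ^ (-5.5 - k)} ≤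
      ENNReal.ofReal (2 * (n : ℝ) ^ (-k)) ∧
    ((UM n).prod (Measure.pi fun _ : Fin (n ^ 2 - 1) => driveM n))
        {p | ∃ q : Fin n × Fin 2, ∃ t ≤ n ^ 2 - 1,
          2 - (n : ℝ) ^ (-5.5 - k) ≤ ((List.ofFn p.2).take t).foldl (stepM n) p.1 q} ≤
      ENNReal.ofReal (2 * (n : ℝ) ^ (-k)) := by
  have hn2 : 2 ≤ n := by
    have : (2 : ℝ) < n := by linarith [le_max_right (2 * k) 4096]
    exact_mod_cast this.le
  have hle := ENNReal.ofReal_le_ofReal (two_mul_sq_mul_sq_mul_rpow_le (one_le_two.trans hn2) k)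
  exact (narrow_matrices_largeness_general n (n ^ 2 - 1) hn2 _).imp hle.trans' hle.trans'

end
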